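/- Flat Normal Form: every satisfiable Horn NAT T without fixed letters is logically equivalent to a Horn NAT of the form {Z : ψ} without fixed letters (with Z = At∖Ab), where ψ is a single Horn CNF; i.e., nesting can be completely eliminated from Horn NATs without fixed letters. -/

import Mathlib

/-!
STATEMENT 10 (Flat Normal Form): every satisfiable Horn NAT without fixed letters is
logically equivalent to a Horn NAT `{Z : ψ}` without fixed letters, with `ψ` a single Horn CNF.
-/

namespace NestedCirc

universe u
variable {α : Type u}

/-- Propositional formulas over atoms `α`. -/
inductive PForm (α : Type u) : Type u where
  | tru : PForm α
  | fls : PForm α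
  | atom : α → PForm α
  | neg : PForm α → PForm α
  | conj : PForm α → PForm α → PForm α
  | disj : PForm α → PForm α → PForm α

namespace PForm

/-- Satisfaction of a propositional formula in an interpretation (set of true atoms). -/
def sat : PForm α → Set α → Prop
  | tru, _ => True
  | fls, _ => False
  | atom a, M => a ∈ M
  | neg φ, M => ¬ φ.sat M
  | conj φ ψ, M => φ.sat M ∧ ψ.sat M
  | disj φ ψ, M => φ.sat M ∨ ψ.sat M

/-- Implication `φ → ψ`. -/
def imp (φ ψ : PForm α) : PForm α := disj (neg φ) ψ

/-- Equivalence `φ ↔ ψ`. -/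
def iffF (φ ψ : PForm α) : PForm α := conj (imp φ ψ) (imp ψ φ)

/-- The atoms occurring in a formula. -/
def atoms : PForm α → Set α
  | tru => ∅
  | fls => ∅
  | atom a => {a}
  | neg φ => φ.atoms
  | conj φ ψ => φ.atoms ∪ ψ.atoms
  | disj φ ψ => φ.atoms ∪ ψ.atoms

/-- Conjunction of a list of formulas. -/
def conjList (l : List (PForm α)) : PForm α := l.foldr conj tru

end PForm

/-- `M ≤_{P;Z} M'` : `M` agrees with `M'` on the fixed atoms `(P ∪ Z)ᶜ`
and is smaller or equal on the minimized atoms `P`. -/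
def lePZ (P Z M M' : Set α) : Prop :=
  M ∩ P ⊆ M' ∩ P ∧ M ∩ (P ∪ Z)ᶜ = M' ∩ (P ∪ Z)ᶜ

/-- `M <_{P;Z} M'` (strict preference). -/
def ltPZ (P Z M M' : Set α) : Prop := lePZ P Z M M' ∧ ¬ lePZ P Z M' M

/-- A block `{C : B₁,…,Bₘ}` of a nested abnormality theory: the described atoms `C`,
the members that are propositional formulas, and the members that are blocks. -/
inductive Block (α : Type u) : Type u where
  | mk : Set α → List (PForm α) → List (Block α) → Block α

/-- Satisfaction of a block: `M ⊨ {C : B₁,…,Bₘ}` iff some interpretation `M*` agreeing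
with `M` outside `Ab` satisfies every member and is `(Ab;C)`-minimal doing so. -/
def Block.sat (Ab : Set α) : Block α → Set α → Prop
  | .mk C fs bs, M =>
      ∃ Ms : Set α, Ms ∩ Abᶜ = M ∩ Abᶜ ∧
        ((∀ f ∈ fs, f.sat Ms) ∧ ∀ b ∈ bs, Block.sat Ab b Ms) ∧
        ∀ N : Set α, ((∀ f ∈ fs, f.sat N) ∧ ∀ b ∈ bs, Block.sat Ab b N) → ¬ ltPZ Ab C N Ms

/-- A nested abnormality theory (NAT): a finite collection of blocks. -/
abbrev NAT (α : Type u) := List (Block α)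

/-- `M ⊨ T` iff `M` satisfies every block of `T`. -/
def NAT.sat (Ab : Set α) (T : NAT α) (M : Set α) : Prop := ∀ B ∈ T, Block.sat Ab B M

/-- `φ` is a clause: a disjunction of literals (with `fls` for the empty clause). -/
def PForm.IsClause : PForm α → Prop
  | .fls => True
  | .atom _ => True
  | .neg (.atom _) => True
  | .disj φ ψ => φ.IsClause ∧ ψ.IsClause
  | _ => False

/-- The number of positive literals of a clause. -/
def PForm.posCount : PForm α → ℕ
  | .atom _ => 1
  | .disj φ ψ => φ.posCount + ψ.posCount
  | _ => 0

/-- A Horn clause: a clause with at most one positive literal. -/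
def PForm.IsHornClause (φ : PForm α) : Prop := φ.IsClause ∧ φ.posCount ≤ 1

/-- A Horn CNF: a conjunction of Horn clauses. -/
def PForm.IsHornCNF : PForm α → Prop
  | .tru => True
  | .conj φ ψ => φ.IsHornCNF ∧ ψ.IsHornCNF
  | φ => φ.IsHornClause

/-- A Horn block: every propositional member is a Horn CNF and every block member is
recursively Horn. -/
inductive Block.IsHorn : Block α → Prop where
  | mk {C : Set α} {fs : List (PForm α)} {bs : List (Block α)} :
      (∀ f ∈ fs, f.IsHornCNF) → (∀ b ∈ bs, b.IsHorn) → Block.IsHorn (.mk C fs bs)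

/-- A block (recursively) without fixed letters: the described atoms of every block
occurring in it are all of `At ∖ Ab`. -/
inductive Block.NoFixed (Ab : Set α) : Block α → Prop where
  | mk {C : Set α} {fs : List (PForm α)} {bs : List (Block α)} :
      C = Abᶜ → (∀ b ∈ bs, b.NoFixed Ab) → Block.NoFixed Ab (.mk C fs bs)

/-!
The models of a Horn CNF are closed under intersection, so a satisfiable one has a least model `L`.
When no letter is fixed, `L` competes with every model, and minimizing the abnormality atoms
therefore just freezes them at their values in `L`. Freezing atoms in a Horn CNF (deleting true
clauses and false literals) gives a Horn CNF again, so by induction on nesting every block is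
equivalent to a Horn CNF. As satisfaction of a block ignores the abnormality atoms, that CNF can be
wrapped in a single block without changing its models.
-/

section LeastModel

variable {φ : PForm α} {S : Set (Set α)}

theorem PForm.IsClause.antitone_sat (hφ : φ.IsClause) (hpos : φ.posCount = 0) :
    Antitone φ.sat := by
  intro L M hLM hM
  induction φ with
  | tru => trivial
  | fls => exact hM
  | atom a => simp [PForm.posCount] at hpos
  | neg χ _ =>
    cases χ with
    | atom a => exact fun haL => hM (hLM haL)
    | _ => simp [PForm.IsClause] at hφ
  | conj χ₁ χ₂ _ _ => simp [PForm.IsClause] at hφ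
  | disj χ₁ χ₂ ih₁ ih₂ =>
    obtain ⟨hpos₁, hpos₂⟩ := Nat.add_eq_zero_iff.1 hpos
    exact hM.imp (ih₁ hφ.1 hpos₁) (ih₂ hφ.2 hpos₂)

theorem PForm.sat_disj_sInter_of_antitone {χ₁ χ₂ : PForm α}
    (h₁ : (∀ M ∈ S, χ₁.sat M) → χ₁.sat (⋂₀ S)) (h₂ : Antitone χ₂.sat)
    (h : ∀ M ∈ S, (χ₁.disj χ₂).sat M) : (χ₁.disj χ₂).sat (⋂₀ S) := by
  by_cases hall : ∀ M ∈ S, χ₁.sat M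
  · exact Or.inl (h₁ hall)
  · push Not at hall
    obtain ⟨M, hMS, hM⟩ := hall
    exact Or.inr (h₂ (Set.sInter_subset_of_mem hMS) ((h M hMS).resolve_left hM))

theorem PForm.IsHornClause.sat_sInter (hφ : φ.IsHornClause) (hS : S.Nonempty)
    (h : ∀ M ∈ S, φ.sat M) : φ.sat (⋂₀ S) := by
  obtain ⟨hclause, hpos⟩ := hφ
  induction φ with
  | tru => trivial
  | fls => exact hS.elim h
  | atom a => exact h
  | neg χ _ =>
    obtain ⟨M, hMS⟩ := hS
    exact hclause.antitone_sat rfl (Set.sInter_subset_of_mem hMS) (h M hMS)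
  | conj χ₁ χ₂ _ _ => simp [PForm.IsClause] at hclause
  | disj χ₁ χ₂ ih₁ ih₂ =>
    have hsum : χ₁.posCount + χ₂.posCount ≤ 1 := hpos
    by_cases hpos₂ : χ₂.posCount = 0
    · exact sat_disj_sInter_of_antitone (fun h₁ => ih₁ h₁ hclause.1 (by lia))
        (hclause.2.antitone_sat hpos₂) h
    · exact (sat_disj_sInter_of_antitone (fun h₂ => ih₂ h₂ hclause.2 (by lia))
        (hclause.1.antitone_sat (by lia)) fun M hM => (h M hM).symm).symm

theorem PForm.IsHornCNF.sat_sInter (hφ : φ.IsHornCNF) (hS : S.Nonempty)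
    (h : ∀ M ∈ S, φ.sat M) : φ.sat (⋂₀ S) := by
  induction φ with
  | tru => trivial
  | conj χ₁ χ₂ ih₁ ih₂ =>
    exact ⟨ih₁ hφ.1 fun M hM => (h M hM).1, ih₂ hφ.2 fun M hM => (h M hM).2⟩
  | _ => exact PForm.IsHornClause.sat_sInter hφ hS h

theorem PForm.IsHornCNF.isLeast_sInter (hφ : φ.IsHornCNF) (hsat : {M | φ.sat M}.Nonempty) :
    IsLeast {M | φ.sat M} (⋂₀ {M | φ.sat M}) :=
  ⟨hφ.sat_sInter hsat fun _ hM => hM, fun _ hM => Set.sInter_subset_of_mem hM⟩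

end LeastModel

section Definability

/-- The condition `P` on interpretations is expressed by a clause with at most `n` positive
literals, or holds everywhere. The second case makes these conditions closed under fixing the truth
values of some atoms; it is separate because no clause without positive literals is valid. -/
def ClauseDefinable (n : ℕ) (P : Set α → Prop) : Prop :=
  (∀ M, P M) ∨ ∃ c : PForm α, c.IsClause ∧ c.posCount ≤ n ∧ c.sat = P

/-- The condition `P` on interpretations is expressed by a Horn CNF; in these terms the theorem
follows from closure of Horn definability under the semantic operations of a block. -/
def HornDefinable (P : Set α → Prop) : Prop :=
  ∃ ψ : PForm α, ψ.IsHornCNF ∧ ψ.sat = P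

variable {m n : ℕ} {P Q : Set α → Prop}

theorem PForm.IsHornClause.isHornCNF {φ : PForm α} (hφ : φ.IsHornClause) : φ.IsHornCNF := by
  cases φ with
  | tru => trivial
  | conj χ₁ χ₂ => simp [PForm.IsHornClause, PForm.IsClause] at hφ
  | _ => exact hφ

theorem ClauseDefinable.mono (hmn : m ≤ n) (hP : ClauseDefinable m P) : ClauseDefinable n P :=
  hP.imp_right fun ⟨c, hc, hcm, hcP⟩ => ⟨c, hc, hcm.trans hmn, hcP⟩

theorem ClauseDefinable.const (n : ℕ) (p : Prop) :
    ClauseDefinable n fun _ : Set α => p := by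
  by_cases hp : p
  · exact Or.inl fun _ => hp
  · exact Or.inr ⟨.fls, trivial, Nat.zero_le n, funext fun _ => (eq_false hp).symm⟩

theorem ClauseDefinable.or (hP : ClauseDefinable m P) (hQ : ClauseDefinable n Q) :
    ClauseDefinable (m + n) fun M => P M ∨ Q M := by
  rcases hP with hP | ⟨c, hc, hcm, rfl⟩
  · exact Or.inl fun M => Or.inl (hP M)
  rcases hQ with hQ | ⟨d, hd, hdn, rfl⟩
  · exact Or.inl fun M => Or.inr (hQ M)
  exact Or.inr ⟨c.disj d, ⟨hc, hd⟩, Nat.add_le_add hcm hdn, rfl⟩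

theorem ClauseDefinable.hornDefinable (hP : ClauseDefinable 1 P) : HornDefinable P := by
  rcases hP with hP | ⟨c, hc, hpos, rfl⟩
  · exact ⟨.tru, trivial, funext fun M => (eq_true (hP M)).symm⟩
  · exact ⟨c, PForm.IsHornClause.isHornCNF ⟨hc, hpos⟩, rfl⟩

theorem HornDefinable.and (hP : HornDefinable P) (hQ : HornDefinable Q) :
    HornDefinable fun M => P M ∧ Q M := by
  obtain ⟨φ, hφ, rfl⟩ := hP
  obtain ⟨χ, hχ, rfl⟩ := hQ
  exact ⟨φ.conj χ, ⟨hφ, hχ⟩, rfl⟩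

theorem HornDefinable.const (p : Prop) : HornDefinable fun _ : Set α => p :=
  (ClauseDefinable.const 1 p).hornDefinable

theorem HornDefinable.forall_mem {β : Type*} {R : β → Set α → Prop} {l : List β}
    (hR : ∀ b ∈ l, HornDefinable (R b)) : HornDefinable fun M => ∀ b ∈ l, R b M := by
  induction l with
  | nil => simpa using HornDefinable.const True
  | cons b l ih =>
    simp only [List.forall_mem_cons] at hR ⊢
    exact hR.1.and (ih hR.2)

theorem PForm.IsClause.clauseDefinable_ite {c : PForm α} (hc : c.IsClause) (A L : Set α) :
    ClauseDefinable c.posCount fun M => c.sat (A.ite L M) := by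
  induction c with
  | tru => simp [PForm.IsClause] at hc
  | fls => exact .const _ False
  | atom a =>
    by_cases ha : a ∈ A
    · simpa [PForm.sat, Set.ite, ha] using ClauseDefinable.const _ (a ∈ L)
    · exact Or.inr ⟨.atom a, trivial, le_rfl, by simp [PForm.sat, Set.ite, ha]⟩
  | neg χ _ =>
    cases χ with
    | atom a =>
      by_cases ha : a ∈ A
      · simpa [PForm.sat, Set.ite, ha] using ClauseDefinable.const _ (a ∉ L)
      · exact Or.inr ⟨.neg (.atom a), trivial, le_rfl, by simp [PForm.sat, Set.ite, ha]⟩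
    | _ => simp [PForm.IsClause] at hc
  | conj χ₁ χ₂ _ _ => simp [PForm.IsClause] at hc
  | disj χ₁ χ₂ ih₁ ih₂ => exact (ih₁ hc.1).or (ih₂ hc.2)

theorem PForm.IsHornCNF.hornDefinable_ite {φ : PForm α} (hφ : φ.IsHornCNF) (A L : Set α) :
    HornDefinable fun M => φ.sat (A.ite L M) := by
  induction φ with
  | tru => exact .const True
  | conj χ₁ χ₂ ih₁ ih₂ => exact (ih₁ hφ.1).and (ih₂ hφ.2)
  | _ => exact ((PForm.IsClause.clauseDefinable_ite hφ.1 A L).mono hφ.2).hornDefinable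

end Definability

section Circumscription

/-- The models of `{C : P}` for an arbitrary condition `P` on interpretations: `M` agrees outside
`Ab` with some `(Ab;C)`-minimal interpretation satisfying `P`. It is the semantics of a block with
the syntax of its members abstracted away. -/
def circ (Ab C : Set α) (P : Set α → Prop) (M : Set α) : Prop :=
  ∃ Ms : Set α, Ms ∩ Abᶜ = M ∩ Abᶜ ∧ P Ms ∧ ∀ N : Set α, P N → ¬ ltPZ Ab C N Ms

variable {Ab C L M N : Set α} {P : Set α → Prop}

theorem ltPZ_compl_iff : ltPZ Ab Abᶜ N M ↔ N ∩ Ab ⊂ M ∩ Ab := by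
  simp [ltPZ, lePZ, ssubset_iff_subset_not_subset]

theorem circ_compl_iff_of_isLeast (hL : IsLeast {N | P N} L) :
    circ Ab Abᶜ P M ↔ P (Ab.ite L M) := by
  have hL_le (N) (hN : P N) : L ∩ Ab ⊆ N ∩ Ab := Set.inter_subset_inter_left Ab (hL.2 hN)
  simp only [circ, ltPZ_compl_iff]
  constructor
  · rintro ⟨Ms, hagree, hMs, hmin⟩
    have hAb : L ∩ Ab = Ms ∩ Ab := (hL_le Ms hMs).eq_of_not_ssubset (hmin L hL.1)
    have hite : Ab.ite L M = Ms := by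
      rw [Set.ite, Set.sdiff_eq, hAb, ← hagree, Set.inter_union_compl]
    rwa [hite]
  · intro h
    refine ⟨Ab.ite L M, Set.ite_inter_compl_self Ab L M, h, fun N hN hlt => ?_⟩
    rw [Set.ite_inter_self] at hlt
    exact hlt.not_subset (hL_le N hN)

theorem HornDefinable.circ_compl (hP : HornDefinable P) : HornDefinable (circ Ab Abᶜ P) := by
  obtain ⟨φ, hφ, rfl⟩ := hP
  by_cases hsat : {M | φ.sat M}.Nonempty
  · have hcirc := fun M => circ_compl_iff_of_isLeast (Ab := Ab) (M := M) (hφ.isLeast_sInter hsat)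
    rw [funext fun M => propext (hcirc M)]
    exact hφ.hornDefinable_ite Ab _
  · have hcirc (M) : ¬ circ Ab Abᶜ φ.sat M := fun ⟨Ms, _, hMs, _⟩ => hsat ⟨Ms, hMs⟩
    simpa only [funext fun M => eq_false (hcirc M)] using HornDefinable.const False

theorem circ_inter_compl_iff : circ Ab C P (M ∩ Abᶜ) ↔ circ Ab C P M := by
  simp only [circ, Set.inter_assoc, Set.inter_self]

theorem circ_iff_of_forall_inter_compl_iff (hP : ∀ N, P (N ∩ Abᶜ) ↔ P N) :
    circ Ab C P M ↔ P M := by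
  constructor
  · rintro ⟨Ms, hagree, hMs, -⟩
    rwa [← hP, ← hagree, hP]
  · intro hM
    refine ⟨M ∩ Abᶜ, by simp, (hP M).2 hM, fun N _ hlt => hlt.2 ⟨?_, hlt.1.2.symm⟩⟩
    simp [Set.inter_assoc]

end Circumscription

section Blocks

variable {Ab : Set α}

theorem Block.sat_mk (C : Set α) (fs : List (PForm α)) (bs : List (Block α)) :
    (Block.mk C fs bs).sat Ab =
      circ Ab C fun M => (∀ f ∈ fs, f.sat M) ∧ ∀ b ∈ bs, b.sat Ab M := by
  funext M
  rw [Block.sat, circ]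

theorem Block.IsHorn.hornDefinable_sat {B : Block α} (hB : B.IsHorn) (hfix : B.NoFixed Ab) :
    HornDefinable (B.sat Ab) := by
  induction hB with
  | mk hfs _ ih =>
    obtain ⟨rfl, hbs⟩ := hfix
    rw [Block.sat_mk]
    have hformulas := HornDefinable.forall_mem fun f hf => ⟨f, hfs f hf, rfl⟩
    have hblocks := HornDefinable.forall_mem fun b hb => ih b hb (hbs b hb)
    exact (hformulas.and hblocks).circ_compl

theorem NAT.sat_inter_compl_iff {T : NAT α} {M : Set α} :
    NAT.sat Ab T (M ∩ Abᶜ) ↔ NAT.sat Ab T M :=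
  forall₂_congr fun ⟨C, fs, bs⟩ _ => by rw [Block.sat_mk, circ_inter_compl_iff]

theorem NAT.sat_singleton_block_iff {C : Set α} {ψ : PForm α} {M : Set α} :
    NAT.sat Ab [Block.mk C [ψ] []] M ↔ circ Ab C ψ.sat M := by
  simp [NAT.sat, Block.sat_mk]

end Blocks

/-- **Flat Normal Form.** Every satisfiable Horn NAT `T` without fixed
letters is logically equivalent to a Horn NAT of the form `{Z : ψ}` without fixed
letters (with `Z = At ∖ Ab`), where `ψ` is a single Horn CNF: nesting can be
completely eliminated from Horn NATs without fixed letters. -/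
theorem horn_nat_flat_normal_form (Ab : Set α) (T : NAT α)
    (hHorn : ∀ B ∈ T, B.IsHorn) (hNoFixed : ∀ B ∈ T, B.NoFixed Ab)
    (hSat : ∃ M : Set α, NAT.sat Ab T M) :
    ∃ ψ : PForm α, ψ.IsHornCNF ∧
      ∀ M : Set α, NAT.sat Ab T M ↔ NAT.sat Ab [Block.mk Abᶜ [ψ] []] M := by
  obtain ⟨ψ, hψ, hψT⟩ : HornDefinable (NAT.sat Ab T) :=
    HornDefinable.forall_mem fun B hB => (hHorn B hB).hornDefinable_sat (hNoFixed B hB)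
  have ignores_Ab (M) : ψ.sat (M ∩ Abᶜ) ↔ ψ.sat M := by
    rw [hψT, NAT.sat_inter_compl_iff]
  refine ⟨ψ, hψ, fun M => ?_⟩
  rw [NAT.sat_singleton_block_iff, circ_iff_of_forall_inter_compl_iff ignores_Ab, hψT]

end NestedCirc
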